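/- arXiv:1402.1752 — 5 statements merged into one kernel-verified Lean document; each statement's English description precedes it below -/
import Mathlib

section
/- Let m > 0 and σ_r, σ_φ be real constants. Define σ : ℝ² → ℝ^{2×2} on coordinates q = (r, φ) by σ₁₁(r,φ) = m σ_r r, σ₂₂(r,φ) = m σ_φ r, σ₁₂ = σ₂₁ = 0, and let γ : ℝ² → ℝ^{2×2} be identically zero. Then the Milstein compatibility conditions for the existence of a stochastic Hamiltonian formulation — namely ∂σ_{i j}/∂p^α + ∂γ_{α j}/∂q^i = 0, ∂σ_{i j}/∂q^α = ∂σ_{α j}/∂q^i for α ≠ i, and ∂γ_{i j}/∂p^α = ∂γ_{α j}/∂p^i for α ≠ i (for i, α ∈ {1,2}, j ∈ {1,2}) — hold at every point (r, φ) ∈ ℝ² if and only if σ_φ = 0. In particular, the Sharma–Parthasarathy stochastic two-body problem (which requires σ_φ ≠ 0) does not possess a stochastic Hamiltonian formulation. -/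
/-!
With noise acting only on the momenta and depending only on the positions, Milstein's conditions
say that every column of the diffusion matrix is a closed 1-form in the positions. A diagonal
matrix has columns `aⱼ dqʲ`, and such a form is closed exactly when `aⱼ` depends on `qʲ` alone.
The angular coefficient `m σφ r` depends on `r`, so closedness forces `m σφ = 0`.
-/

theorem fderiv_comp_snd_apply {𝕜 E F G : Type*} [NontriviallyNormedField 𝕜]
    [NormedAddCommGroup E] [NormedSpace 𝕜 E] [NormedAddCommGroup F] [NormedSpace 𝕜 F]
    [NormedAddCommGroup G] [NormedSpace 𝕜 G] {f : F → G} {x : E × F}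
    (hf : DifferentiableAt 𝕜 f x.2) (v : E × F) :
    fderiv 𝕜 (fun y : E × F => f y.2) x v = fderiv 𝕜 f x.2 v.2 :=
  congrArg (· v) (hf.hasFDerivAt.comp x hasFDerivAt_snd).fderiv

section Milstein

variable {ι κ : Type*} [DecidableEq ι]

/-- Milstein's conditions for the system `dP = f dt + ∑ᵣ σᵣ ∘ dBʳ`, `dQ = g dt + ∑ᵣ γᵣ ∘ dBʳ` to
have a stochastic Hamiltonian formulation. Points of phase space are pairs `(p, q)`, and `σ i r`,
`γ i r` are the `i`-th components of the coefficients of the `r`-th noise. -/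
def MilsteinCompatible (σ γ : ι → κ → (ι → ℝ) × (ι → ℝ) → ℝ) : Prop :=
  (∀ (x : (ι → ℝ) × (ι → ℝ)) (i α : ι) (r : κ),
    fderiv ℝ (σ i r) x (Pi.single α 1, 0) + fderiv ℝ (γ α r) x (0, Pi.single i 1) = 0) ∧
  (∀ (x : (ι → ℝ) × (ι → ℝ)) (i α : ι) (r : κ), α ≠ i →
    fderiv ℝ (σ i r) x (0, Pi.single α 1) = fderiv ℝ (σ α r) x (0, Pi.single i 1)) ∧
  (∀ (x : (ι → ℝ) × (ι → ℝ)) (i α : ι) (r : κ), α ≠ i →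
    fderiv ℝ (γ i r) x (Pi.single α 1, 0) = fderiv ℝ (γ α r) x (Pi.single i 1, 0))

variable [Finite ι]

theorem milsteinCompatible_comp_snd_zero_iff {A : ι → κ → (ι → ℝ) → ℝ}
    (hA : ∀ i r, Differentiable ℝ (A i r)) :
    MilsteinCompatible (fun i r x => A i r x.2) (fun _ _ _ => 0) ↔
      ∀ (q : ι → ℝ) (i α : ι) (r : κ), α ≠ i →
        fderiv ℝ (A i r) q (Pi.single α 1) = fderiv ℝ (A α r) q (Pi.single i 1) := by
  cases nonempty_fintype ι
  simp [MilsteinCompatible, fderiv_comp_snd_apply (hA _ _ _)]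

theorem milsteinCompatible_diagonal_zero_iff {a : ι → (ι → ℝ) → ℝ}
    (ha : ∀ i, Differentiable ℝ (a i)) :
    MilsteinCompatible (fun i j x => Matrix.diagonal (fun k => a k x.2) i j) (fun _ _ _ => 0) ↔
      ∀ (q : ι → ℝ) (i α : ι), α ≠ i → fderiv ℝ (a i) q (Pi.single α 1) = 0 := by
  have diagonal_eq (i j : ι) :
      (fun q => Matrix.diagonal (fun k => a k q) i j) = if i = j then a i else 0 := by
    ext q
    split_ifs with h <;> simp [h]
  have hdiff (i j : ι) : Differentiable ℝ fun q => Matrix.diagonal (fun k => a k q) i j := by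
    rw [diagonal_eq]
    split_ifs
    exacts [ha i, differentiable_const 0]
  rw [milsteinCompatible_comp_snd_zero_iff hdiff]
  simp only [diagonal_eq]
  constructor
  · intro closed q i α hne
    simpa [hne] using closed q i α i hne
  · intro separate q i α j hne
    by_cases hi : i = j
    · subst hi
      simpa [hne] using separate q i α hne
    · by_cases hα : α = j
      · subst hα
        simpa [hi] using (separate q α i hne.symm).symm
      · simp [hi, hα]

theorem milsteinCompatible_diagonal_mul_coord_zero_iff (c : ι → ℝ) (k : ι) :
    MilsteinCompatible (fun i j x => Matrix.diagonal (fun l => c l * x.2 k) i j)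
      (fun _ _ _ => 0) ↔ ∀ i, i ≠ k → c i = 0 := by
  cases nonempty_fintype ι
  have fderiv_mul_coord (b : ℝ) (q v : ι → ℝ) : fderiv ℝ (fun y => b * y k) q v = b * v k :=
    congrArg (· v) (b • ContinuousLinearMap.proj (R := ℝ) (φ := fun _ : ι => ℝ) k).fderiv
  rw [milsteinCompatible_diagonal_zero_iff (a := fun i q => c i * q k) fun i => by fun_prop]
  simp only [fderiv_mul_coord]
  constructor
  · intro h i hi
    simpa using h 0 i k hi.symm
  · intro h _ i α hne
    by_cases hi : i = k
    · subst hi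
      simp [hne.symm]
    · simp [h i hi]

end Milstein

/-- Milstein's compatibility conditions for a stochastic Hamiltonian
formulation, applied to the Sharma–Parthasarathy diffusion coefficients
`σ = diag(m σr r, m σφ r)` (a function of the positions `q = (r, φ)` only)
and `γ ≡ 0`, hold at every point of phase space if and only if `σφ = 0`.
Phase space points are pairs `x = (p, q)`; the partial derivative w.r.t.
`p^α` is `fderiv _ _ x (Pi.single α 1, 0)` and w.r.t. `q^k` it is
`fderiv _ _ x (0, Pi.single k 1)`. -/
theorem sharma_parthasarathy_not_hamiltonian
    (m σr σφ : ℝ) (hm : 0 < m)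
    (S G : Fin 2 → Fin 2 → ((Fin 2 → ℝ) × (Fin 2 → ℝ)) → ℝ)
    (hS : S = fun i j x =>
      if i = 0 ∧ j = 0 then m * σr * x.2 0
      else if i = 1 ∧ j = 1 then m * σφ * x.2 0
      else 0)
    (hG : G = fun _ _ _ => 0) :
    ((∀ (x : (Fin 2 → ℝ) × (Fin 2 → ℝ)) (i α j : Fin 2),
        fderiv ℝ (S i j) x (Pi.single α 1, 0)
          + fderiv ℝ (G α j) x (0, Pi.single i 1) = 0) ∧
     (∀ (x : (Fin 2 → ℝ) × (Fin 2 → ℝ)) (i α j : Fin 2), α ≠ i →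
        fderiv ℝ (S i j) x (0, Pi.single α 1)
          = fderiv ℝ (S α j) x (0, Pi.single i 1)) ∧
     (∀ (x : (Fin 2 → ℝ) × (Fin 2 → ℝ)) (i α j : Fin 2), α ≠ i →
        fderiv ℝ (G i j) x (Pi.single α 1, 0)
          = fderiv ℝ (G α j) x (Pi.single i 1, 0)))
    ↔ σφ = 0 := by
  have S_eq : S = fun i j x => Matrix.diagonal (fun k => ![m * σr, m * σφ] k * x.2 0) i j := by
    ext i j x
    fin_cases i <;> fin_cases j <;> simp [hS]
  subst S_eq hG
  change MilsteinCompatible _ _ ↔ _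
  rw [milsteinCompatible_diagonal_mul_coord_zero_iff]
  simp [hm.ne']
end

section
/- Let m > 0, k > 0 and σ_r, σ_φ be real constants. On the region {(r, φ, v, w) ∈ ℝ⁴ : r > 0}, define the drift vector field b(r, φ, v, w) = (v, w, r w² − k/(m r²), −2 v w / r) and the energy function H(r, φ, v, w) = (m/2)(v² + r² w²) − k/r. Then at every point with r > 0: (i) the Itô drift of H equals ∇H · b + (1/2)[(σ_r r)² ∂²H/∂v² + (σ_φ/r)² ∂²H/∂w²] = (m/2)(σ_r² r² + σ_φ²); and (ii) the diffusion coefficients of H are (∂H/∂v)(σ_r r) = m r v σ_r and (∂H/∂w)(σ_φ/r) = m r w σ_φ. Hence dH(X_t) = m r v σ_r dB^r_t + m r w σ_φ dB^φ_t + (m/2)(σ_r² r² + σ_φ²) dt, and since the drift (m/2)(σ_r² r² + σ_φ²) is strictly positive, the energy is not a weak first integral of the stochastic two-body problem. -/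
/-! The drift vector field is Newton's law in polar coordinates, which conserves the energy, so the
first-order part `∇H · b` of the Itô drift vanishes. What remains is the Itô correction of the
kinetic energy, with `∂²H/∂v² = m` and `∂²H/∂w² = m r²`. The same holds for
`H = (m/2)(v² + r² w²) + V(r)` with any differentiable potential `V` in place of `-k/r`. -/

open scoped Topology

/-- The energy `(m/2)(v² + r² w²) + V(r)` of a particle of mass `m` in the central potential `V`,
as a function of the state `(r, φ, v, w)` with `v = ṙ` and `w = φ̇`. -/
noncomputable def centralEnergy (m : ℝ) (V : ℝ → ℝ) (x : Fin 4 → ℝ) : ℝ :=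
  m / 2 * ((x 2) ^ 2 + (x 0) ^ 2 * (x 3) ^ 2) + V (x 0)

/-- The vector field on states `(r, φ, v, w)` given by Newton's law for a particle of mass `m` in
the central potential `V`. The force is `-deriv V`, meaningful only where `V` is differentiable, and
the last component only for `r ≠ 0`. -/
noncomputable def centralField (m : ℝ) (V : ℝ → ℝ) (x : Fin 4 → ℝ) : Fin 4 → ℝ :=
  ![x 2, x 3, x 0 * (x 3) ^ 2 - deriv V (x 0) / m, -2 * x 2 * x 3 / x 0]

theorem sum_map_single_mul {ι R L : Type*} [Fintype ι] [DecidableEq ι] [CommSemiring R]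
    [FunLike L (ι → R) R] [LinearMapClass L R (ι → R) R] (f : L) (u : ι → R) :
    ∑ i, f (Pi.single i 1) * u i = f u := by
  conv_rhs => rw [pi_eq_sum_univ' u, map_sum]
  simp only [map_smul, smul_eq_mul, mul_comm]

section CentralEnergy

variable {m : ℝ} {V : ℝ → ℝ} {x : Fin 4 → ℝ}

theorem fderiv_centralEnergy_apply (hV : DifferentiableAt ℝ V (x 0)) (u : Fin 4 → ℝ) :
    fderiv ℝ (centralEnergy m V) x u =
      (m * x 0 * (x 3) ^ 2 + deriv V (x 0)) * u 0 + m * x 2 * u 2 + m * (x 0) ^ 2 * x 3 * u 3 := by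
  have coord (i : Fin 4) := hasFDerivAt_apply (𝕜 := ℝ) i x
  have kinetic :=
    (((coord 2).pow 2).add (((coord 0).pow 2).mul ((coord 3).pow 2))).const_mul (m / 2)
  have potential := hV.hasDerivAt.comp_hasFDerivAt x (coord 0)
  have energy : HasFDerivAt (centralEnergy m V) _ x := kinetic.add potential
  rw [energy.fderiv]
  simp only [Nat.add_one_sub_one, pow_one, nsmul_eq_mul, Nat.cast_ofNat, smul_add, add_apply,
    smul_apply, ContinuousLinearMap.proj_apply, smul_eq_mul]
  ring

theorem fderiv_centralEnergy_single_two (hV : DifferentiableAt ℝ V (x 0)) :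
    fderiv ℝ (centralEnergy m V) x (Pi.single 2 1) = m * x 2 := by
  simp [fderiv_centralEnergy_apply hV]

theorem fderiv_centralEnergy_single_three (hV : DifferentiableAt ℝ V (x 0)) :
    fderiv ℝ (centralEnergy m V) x (Pi.single 3 1) = m * (x 0) ^ 2 * x 3 := by
  simp [fderiv_centralEnergy_apply hV]

theorem fderiv_fderiv_centralEnergy_single_two (hV : ∀ᶠ r in 𝓝 (x 0), DifferentiableAt ℝ V r) :
    fderiv ℝ (fun y => fderiv ℝ (centralEnergy m V) y (Pi.single 2 1)) x (Pi.single 2 1) = m := by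
  have partial_eq : (fun y => fderiv ℝ (centralEnergy m V) y (Pi.single 2 1)) =ᶠ[𝓝 x]
      fun y => m * y 2 :=
    ((continuous_apply 0).continuousAt.eventually hV).mono fun _ => fderiv_centralEnergy_single_two
  rw [partial_eq.fderiv_eq, ((hasFDerivAt_apply 2 x).const_mul m).fderiv]
  simp

theorem fderiv_fderiv_centralEnergy_single_three (hV : ∀ᶠ r in 𝓝 (x 0), DifferentiableAt ℝ V r) :
    fderiv ℝ (fun y => fderiv ℝ (centralEnergy m V) y (Pi.single 3 1)) x (Pi.single 3 1) =
      m * (x 0) ^ 2 := by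
  have partial_eq : (fun y => fderiv ℝ (centralEnergy m V) y (Pi.single 3 1)) =ᶠ[𝓝 x]
      fun y => m * (y 0) ^ 2 * y 3 :=
    ((continuous_apply 0).continuousAt.eventually hV).mono
      fun _ => fderiv_centralEnergy_single_three
  have partial_deriv : HasFDerivAt (fun y : Fin 4 → ℝ => m * (y 0) ^ 2 * y 3) _ x :=
    (((hasFDerivAt_apply (𝕜 := ℝ) 0 x).pow 2).const_mul m).mul (hasFDerivAt_apply 3 x)
  rw [partial_eq.fderiv_eq, partial_deriv.fderiv]
  simp

theorem fderiv_centralEnergy_centralField (hm : m ≠ 0) (hV : DifferentiableAt ℝ V (x 0)) :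
    fderiv ℝ (centralEnergy m V) x (centralField m V x) = 0 := by
  rw [fderiv_centralEnergy_apply hV]
  simp only [centralField, Matrix.cons_val]
  field_simp
  ring

theorem energy_ito_drift_and_diffusion_general (hm : m ≠ 0) (hx : x 0 ≠ 0)
    (hV : ∀ᶠ r in 𝓝 (x 0), DifferentiableAt ℝ V r) (σr σφ : ℝ) :
    ((∑ i : Fin 4, fderiv ℝ (centralEnergy m V) x (Pi.single i 1) * centralField m V x i)
      + (1 / 2 : ℝ) *
        ((σr * x 0) ^ 2 *
            fderiv ℝ (fun y => fderiv ℝ (centralEnergy m V) y (Pi.single 2 1)) x (Pi.single 2 1)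
          + (σφ / x 0) ^ 2 *
            fderiv ℝ (fun y => fderiv ℝ (centralEnergy m V) y (Pi.single 3 1)) x (Pi.single 3 1))
      = m / 2 * (σr ^ 2 * (x 0) ^ 2 + σφ ^ 2))
    ∧ fderiv ℝ (centralEnergy m V) x (Pi.single 2 1) * (σr * x 0) = m * x 0 * x 2 * σr
    ∧ fderiv ℝ (centralEnergy m V) x (Pi.single 3 1) * (σφ / x 0) = m * x 0 * x 3 * σφ := by
  have hVx : DifferentiableAt ℝ V (x 0) := hV.self_of_nhds
  rw [sum_map_single_mul, fderiv_centralEnergy_centralField hm hVx,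
    fderiv_fderiv_centralEnergy_single_two hV, fderiv_fderiv_centralEnergy_single_three hV,
    fderiv_centralEnergy_single_two hVx, fderiv_centralEnergy_single_three hVx]
  exact ⟨by field_simp; ring, by ring, by field_simp⟩

end CentralEnergy

theorem centralEnergy_neg_div (m k : ℝ) :
    centralEnergy m (fun r => -(k / r)) =
      fun x => m / 2 * ((x 2) ^ 2 + (x 0) ^ 2 * (x 3) ^ 2) - k / x 0 :=
  funext fun _ => (sub_eq_add_neg _ _).symm

theorem centralField_neg_div (m k : ℝ) :
    centralField m (fun r => -(k / r)) =
      fun x => ![x 2, x 3, x 0 * (x 3) ^ 2 - k / (m * (x 0) ^ 2), -2 * x 2 * x 3 / x 0] := by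
  have deriv_potential (r : ℝ) : deriv (fun s => -(k / s)) r = k / r ^ 2 := by
    simp [div_eq_mul_inv]
  funext x
  simp only [centralField, deriv_potential, div_div, mul_comm m]

theorem eventually_differentiableAt_neg_div (k : ℝ) {r : ℝ} (hr : r ≠ 0) :
    ∀ᶠ s in 𝓝 r, DifferentiableAt ℝ (fun s => -(k / s)) s :=
  (eventually_ne_nhds hr).mono fun _ hs =>
    ((differentiableAt_const k).div differentiableAt_id hs).neg

/-- The energy `H(r,φ,v,w) = (m/2)(v² + r² w²) − k/r` is not preserved by the
Sharma–Parthasarathy stochastic two-body problem: at every point with `r > 0`,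
(i) its Itô drift `∇H · b + ½[(σr r)² ∂²H/∂v² + (σφ/r)² ∂²H/∂w²]` equals
`(m/2)(σr² r² + σφ²)`, and (ii) its diffusion coefficients are
`(∂H/∂v)(σr r) = m r v σr` and `(∂H/∂w)(σφ/r) = m r w σφ`.
Coordinates: `x = (r, φ, v, w)`. -/
theorem energy_ito_drift_and_diffusion
    (m k σr σφ : ℝ) (hm : 0 < m) (hk : 0 < k)
    (H : (Fin 4 → ℝ) → ℝ)
    (hH : H = fun x => m / 2 * ((x 2) ^ 2 + (x 0) ^ 2 * (x 3) ^ 2) - k / x 0)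
    (b : (Fin 4 → ℝ) → Fin 4 → ℝ)
    (hb : b = fun x => ![x 2, x 3,
      x 0 * (x 3) ^ 2 - k / (m * (x 0) ^ 2),
      -2 * x 2 * x 3 / x 0]) :
    ∀ x : Fin 4 → ℝ, 0 < x 0 →
      ((∑ i : Fin 4, fderiv ℝ H x (Pi.single i 1) * b x i)
        + (1 / 2 : ℝ) *
          ((σr * x 0) ^ 2 *
              fderiv ℝ (fun y => fderiv ℝ H y (Pi.single 2 1)) x (Pi.single 2 1)
            + (σφ / x 0) ^ 2 *
              fderiv ℝ (fun y => fderiv ℝ H y (Pi.single 3 1)) x (Pi.single 3 1))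
        = m / 2 * (σr ^ 2 * (x 0) ^ 2 + σφ ^ 2))
      ∧ fderiv ℝ H x (Pi.single 2 1) * (σr * x 0) = m * x 0 * x 2 * σr
      ∧ fderiv ℝ H x (Pi.single 3 1) * (σφ / x 0) = m * x 0 * x 3 * σφ := by
  intro x hx
  rw [hH, hb, ← centralEnergy_neg_div, ← centralField_neg_div]
  exact energy_ito_drift_and_diffusion_general hm.ne' hx.ne'
    (eventually_differentiableAt_neg_div k hx.ne') σr σφ
end

section
/- Let m > 0, μ > 0, k = m μ, a > 0, 0 < e < 1, and f ∈ ℝ. Set H = −k/(2a) and c = m √(μ/(a(1−e²))). Then for all real numbers R̄, T̄, ρ, τ, χ: (k/(2H²)) · [c (e sin f · R̄ + (1 + e cos f) · T̄) + (m/2)(ρ + τ)] − (k/(2H³)) · c² (e² sin² f · ρ + (1 + e cos f)² · τ + 2 e sin f (1 + e cos f) · χ) = (2 a^{3/2}/√(μ(1−e²))) (e sin f · R̄ + (1 + e cos f) · T̄) + (a²/μ)[(1 + 4 e² sin² f/(1−e²)) ρ + (1 + 4(1 + e cos f)²/(1−e²)) τ] + (8 a²/(μ(1−e²))) e sin f (1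 + e cos f) χ; moreover (k/(2H²)) · c = 2 a^{3/2}/√(μ(1−e²)). (Variation of the semi-major axis: substituting the drift and diffusion of the energy into the Itô expansion of a = −k/(2H) yields the stochastic Gauss equation for a.) -/
open Real

/-!
Along `a = -k / (2H)` the Itô coefficients are `da/dH = k / (2H²) = 2a²/k` and
`½ d²a/dH² = -k / (2H³) = 4a³/k²`. Both sides are linear in the deterministic force
`e sin f R̄ + (1 + e cos f) T̄`, in `ρ + τ`, and in the squared norm of
`e sin f R̃ + (1 + e cos f) T̃`, so it suffices to compare three coefficients.
-/

section Energy

variable {k a H : ℝ}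

lemma div_two_mul_energy_sq (hH : H = -k / (2 * a)) : k / (2 * H ^ 2) = 2 * a ^ 2 / k := by
  subst hH
  field_simp

lemma div_two_mul_energy_cube (hH : H = -k / (2 * a)) :
    k / (2 * H ^ 3) = -(4 * a ^ 3 / k ^ 2) := by
  subst hH
  field_simp
  ring

end Energy

lemma sq_div_mul_sqrt_div_mul {a μ : ℝ} (ha : 0 ≤ a) (hμ : 0 ≤ μ) (q : ℝ) :
    a ^ 2 / μ * √(μ / (a * q)) = a ^ ((3 : ℝ) / 2) / √(μ * q) :=
  calc a ^ 2 / μ * √(μ / (a * q))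
      = (√a ^ 2) ^ 2 / √μ ^ 2 * (√μ / (√a * √q)) := by
        rw [sq_sqrt ha, sq_sqrt hμ, sqrt_div hμ, sqrt_mul ha]
    _ = √a ^ 3 / (√μ * √q) := by field_simp
    _ = a ^ ((3 : ℝ) / 2) / √(μ * q) := by
        rw [rpow_div_two_eq_sqrt 3 ha, rpow_ofNat, sqrt_mul hμ]

section ItoCoefficients

variable {m μ k a q H c : ℝ}

lemma ito_diffusion_coeff (hm : m ≠ 0) (hμ : 0 ≤ μ) (hk : k = m * μ) (ha : 0 ≤ a)
    (hH : H = -k / (2 * a)) (hc : c = m * √(μ / (a * q))) :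
    k / (2 * H ^ 2) * c = 2 * a ^ ((3 : ℝ) / 2) / √(μ * q) :=
  calc k / (2 * H ^ 2) * c
      = 2 * (a ^ 2 / μ * √(μ / (a * q))) := by
        rw [div_two_mul_energy_sq hH, hc, hk]
        field_simp
    _ = 2 * a ^ ((3 : ℝ) / 2) / √(μ * q) := by
        rw [sq_div_mul_sqrt_div_mul ha hμ, mul_div_assoc]

lemma ito_energy_drift_correction_coeff (hm : m ≠ 0) (hk : k = m * μ)
    (hH : H = -k / (2 * a)) :
    k / (2 * H ^ 2) * (m / 2) = a ^ 2 / μ := by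
  rw [div_two_mul_energy_sq hH, hk]
  field_simp

lemma ito_quadratic_variation_coeff (hm : m ≠ 0) (hμ : 0 ≤ μ) (hk : k = m * μ) (ha : 0 ≤ a)
    (hq : 0 ≤ q) (hH : H = -k / (2 * a)) (hc : c = m * √(μ / (a * q))) :
    k / (2 * H ^ 3) * c ^ 2 = -(4 * a ^ 2 / (μ * q)) := by
  have hc_sq : c ^ 2 = m ^ 2 * (μ / (a * q)) := by
    rw [hc, mul_pow, sq_sqrt (by positivity)]
  rw [div_two_mul_energy_cube hH, hc_sq, hk]
  field_simp

end ItoCoefficients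

/-- Variation of the semi-major axis: substituting the drift and diffusion of
the energy `H = −k/(2a)` into the Itô expansion of `a = −k/(2H)` yields the
stochastic Gauss equation for the semi-major axis.  Here `ρ = R̃·R̃`,
`τ = T̃·T̃`, `χ = R̃·T̃` and `c = m √(μ/(a(1−e²)))`. -/
theorem stochastic_gauss_semi_major_axis
    (m μ k a e f H c : ℝ)
    (hm : 0 < m) (hμ : 0 < μ) (hk : k = m * μ)
    (ha : 0 < a) (he0 : 0 < e) (he1 : e < 1)
    (hH : H = -k / (2 * a))
    (hc : c = m * Real.sqrt (μ / (a * (1 - e ^ 2)))) :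
    (∀ Rb Tb ρ τ χ : ℝ,
      k / (2 * H ^ 2) *
          (c * (e * sin f * Rb + (1 + e * cos f) * Tb) + m / 2 * (ρ + τ))
        - k / (2 * H ^ 3) *
          (c ^ 2 * (e ^ 2 * sin f ^ 2 * ρ + (1 + e * cos f) ^ 2 * τ
            + 2 * e * sin f * (1 + e * cos f) * χ))
      = 2 * a ^ ((3 : ℝ) / 2) / Real.sqrt (μ * (1 - e ^ 2))
          * (e * sin f * Rb + (1 + e * cos f) * Tb)
        + a ^ 2 / μ * ((1 + 4 * e ^ 2 * sin f ^ 2 / (1 - e ^ 2)) * ρ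
            + (1 + 4 * (1 + e * cos f) ^ 2 / (1 - e ^ 2)) * τ)
        + 8 * a ^ 2 / (μ * (1 - e ^ 2)) * e * sin f * (1 + e * cos f) * χ) ∧
    k / (2 * H ^ 2) * c = 2 * a ^ ((3 : ℝ) / 2) / Real.sqrt (μ * (1 - e ^ 2)) := by
  have hq : 0 ≤ 1 - e ^ 2 := sub_nonneg.2 (pow_le_one₀ he0.le he1.le)
  have h_diffusion := ito_diffusion_coeff hm.ne' hμ.le hk ha.le hH hc
  have h_correction := ito_energy_drift_correction_coeff hm.ne' hk hH
  have h_variation := ito_quadratic_variation_coeff hm.ne' hμ.le hk ha.le hq hH hc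
  refine ⟨fun Rb Tb ρ τ χ => ?_, h_diffusion⟩
  -- With `q` an atom, `ring` splits `(μ * q)⁻¹`, which it does not do for `(μ * (1 - e ^ 2))⁻¹`.
  generalize 1 - e ^ 2 = q at h_diffusion h_variation ⊢
  linear_combination (e * sin f * Rb + (1 + e * cos f) * Tb) * h_diffusion
    + (ρ + τ) * h_correction
    - (e ^ 2 * sin f ^ 2 * ρ + (1 + e * cos f) ^ 2 * τ
        + 2 * e * sin f * (1 + e * cos f) * χ) * h_variation
end

section
/- Let m > 0, μ > 0, k = m μ, a > 0, 0 < e < 1, and f ∈ ℝ. Set H = −k/(2a), M = m √(μ a(1−e²)), r = a(1−e²)/(1 + e cos f), and c = m √(μ/(a(1−e²))). Then for all real numbers R̄, T̄, ρ, τ, χ: (2MH/(e m k²)) · (m r T̄) + (M²/(e m k²)) · [c (e sin f R̄ + (1 + e cos f) T̄) + (m/2)(ρ + τ)] + (H/(e³ m k²)) (m r)² τ − (M⁴/(2 e³ m² k⁴)) c² (e² sin² f ρ + (1 + e cos f)² τ + 2 e sin f (1 + e cos f) χ) + (2M(M²H + m k²)/(e³ m² k⁴)) (m r) c ((1 + e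 cos f) τ + e sin f χ) = √(a(1−e²)/μ) (sin f · R̄ + (cos f + (e + cos f)/(1 + e cos f)) · T̄) + (a(1−e²) cos² f/(2 e μ)) ρ + (a(1−e²)/(μ e)) (2 − (cos f/2)((2 + e cos f)/(1 + e cos f))(cos f + (e + cos f)/(1 + e cos f))) τ + (a(1−e²)/(μ e (1 + e cos f))) (e sin³ f − sin 2f) χ. (Variation of the eccentricity: substituting the drifts and diffusions of the angular momentum and energy into the Itô expansion of e = √(1 + 2M²H/(mk²)) yields the stochastic Gauss equation for e.) -/
open Real

/-!
Write `p = a(1−e²)`, `q = 1 + e cos f`, `C = cos f` and `S = sin f`. On the osculating orbit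
`M² = mkp`, `2pH = −k(1−e²)`, `c = M/p` and `√(p/μ) = M/k`, so each Itô term becomes rational in
`e`, `p`, `q` and `M`. Both drifts are linear in `R̄`, `T̄`, `ρ`, `τ`, `χ` and agree coefficient by
coefficient; the tangential ones reduce to `e(C + (e + C)/q) = q − (1−e²)/q`.
-/

theorem sqrt_div_eq_sqrt_mul_div (x : ℝ) {y : ℝ} (hy : 0 < y) : √(x / y) = √(x * y) / y := by
  rw [← mul_div_mul_right x y hy.ne', sqrt_div' _ (mul_self_nonneg y), sqrt_mul_self hy.le]

section EccentricityDrift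

variable {K : Type*} [Field K] {m μ k p q e C S H M : K}

theorem eccentricity_partial_angularMomentum (hk : k ≠ 0) (hp : p ≠ 0)
    (hH : 2 * p * H = -k * (1 - e ^ 2)) :
    2 * M * H / (e * m * k ^ 2) = -((1 - e ^ 2) * M) / (e * m * k * p) := by
  have two_mul_H : 2 * H = -k * (1 - e ^ 2) / p := by
    rw [eq_div_iff hp]
    linear_combination hH
  rw [mul_right_comm, two_mul_H]
  field_simp

theorem eccentricity_partial_energy (hm : m ≠ 0) (hk : k ≠ 0) (hM : M ^ 2 = m * k * p) :
    M ^ 2 / (e * m * k ^ 2) = p / (e * k) := by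
  rw [hM]
  field_simp

theorem eccentricity_mul_tangential_factor (hq : 1 + e * C ≠ 0) :
    e * (C + (e + C) / (1 + e * C)) = 1 + e * C - (1 - e ^ 2) / (1 + e * C) := by
  field_simp
  ring

theorem eccentricity_drift_radial (hm : m ≠ 0) (hk : k ≠ 0) (hp : p ≠ 0) (he : e ≠ 0)
    (hM : M ^ 2 = m * k * p) :
    M ^ 2 / (e * m * k ^ 2) * (M / p * (e * S)) = M / k * S := by
  rw [eccentricity_partial_energy hm hk hM]
  field_simp

theorem eccentricity_drift_tangential (hm : m ≠ 0) (hk : k ≠ 0) (hp : p ≠ 0) (he : e ≠ 0)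
    (hq : 1 + e * C ≠ 0) (hM : M ^ 2 = m * k * p) (hH : 2 * p * H = -k * (1 - e ^ 2)) :
    2 * M * H / (e * m * k ^ 2) * (m * (p / (1 + e * C)))
        + M ^ 2 / (e * m * k ^ 2) * (M / p * (1 + e * C))
      = M / k * (C + (e + C) / (1 + e * C)) := by
  rw [eccentricity_partial_angularMomentum hk hp hH, eccentricity_partial_energy hm hk hM]
  calc -((1 - e ^ 2) * M) / (e * m * k * p) * (m * (p / (1 + e * C)))
        + p / (e * k) * (M / p * (1 + e * C))
      = M / (k * e) * (1 + e * C - (1 - e ^ 2) / (1 + e * C)) := by field_simp; ring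
    _ = M / (k * e) * (e * (C + (e + C) / (1 + e * C))) := by
      rw [eccentricity_mul_tangential_factor hq]
    _ = M / k * (C + (e + C) / (1 + e * C)) := by
      rw [← mul_assoc, div_mul_eq_mul_div, mul_div_mul_right M k he]

theorem eccentricity_drift_energy_correction (hm : m ≠ 0) (hμ : μ ≠ 0) (hk : k = m * μ)
    (hM : M ^ 2 = m * k * p) :
    M ^ 2 / (e * m * k ^ 2) * (m / 2) = p / (2 * e * μ) := by
  rw [eccentricity_partial_energy hm (hk ▸ mul_ne_zero hm hμ) hM, hk]
  field_simp

theorem eccentricity_second_order_energy (hm : m ≠ 0) (hμ : μ ≠ 0) (hp : p ≠ 0) (hk : k = m * μ)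
    (hM : M ^ 2 = m * k * p) :
    M ^ 4 / (2 * e ^ 3 * m ^ 2 * k ^ 4) * (M / p) ^ 2 = p / (2 * e ^ 3 * μ) := by
  have M_pow_four : M ^ 4 = (m * k * p) ^ 2 := by rw [← hM]; ring
  rw [div_pow, M_pow_four, hM, hk]
  field_simp

theorem eccentricity_second_order_mixed (hm : m ≠ 0) (hμ : μ ≠ 0) (hp : p ≠ 0) (hk : k = m * μ)
    (hM : M ^ 2 = m * k * p) (hH : 2 * p * H = -k * (1 - e ^ 2)) :
    2 * M * (M ^ 2 * H + m * k ^ 2) / (e ^ 3 * m ^ 2 * k ^ 4) * (m * (p / q)) * (M / p)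
      = p * (1 + e ^ 2) / (e ^ 3 * μ * q) := by
  have bracket : 2 * (M ^ 2 * H + m * k ^ 2) = m * k ^ 2 * (1 + e ^ 2) := by
    linear_combination 2 * H * hM + m * k * hH
  calc 2 * M * (M ^ 2 * H + m * k ^ 2) / (e ^ 3 * m ^ 2 * k ^ 4) * (m * (p / q)) * (M / p)
      = M ^ 2 * (2 * (M ^ 2 * H + m * k ^ 2)) / (e ^ 3 * m ^ 2 * k ^ 4)
          * (m * (p / q)) / p := by ring
    _ = p * (1 + e ^ 2) / (e ^ 3 * μ * q) := by
      rw [bracket, hM, hk]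
      field_simp

theorem eccentricity_drift_radial_sq (hm : m ≠ 0) (hμ : μ ≠ 0) (hp : p ≠ 0) (he : e ≠ 0)
    (hk : k = m * μ) (hM : M ^ 2 = m * k * p) (hSC : S ^ 2 + C ^ 2 = 1) :
    M ^ 2 / (e * m * k ^ 2) * (m / 2)
        - M ^ 4 / (2 * e ^ 3 * m ^ 2 * k ^ 4) * (M / p) ^ 2 * (e ^ 2 * S ^ 2)
      = p * C ^ 2 / (2 * e * μ) := by
  rw [eccentricity_drift_energy_correction hm hμ hk hM,
    eccentricity_second_order_energy hm hμ hp hk hM]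
  calc p / (2 * e * μ) - p / (2 * e ^ 3 * μ) * (e ^ 2 * S ^ 2)
      = p * (1 - S ^ 2) / (2 * e * μ) := by field_simp
    _ = p * C ^ 2 / (2 * e * μ) := by rw [← hSC, add_sub_cancel_left]

variable [NeZero (2 : K)]

theorem eccentricity_second_order_angularMomentum (hm : m ≠ 0) (hμ : μ ≠ 0) (hp : p ≠ 0)
    (hk : k = m * μ) (hH : 2 * p * H = -k * (1 - e ^ 2)) :
    H / (e ^ 3 * m * k ^ 2) * (m * (p / q)) ^ 2
      = -(p * (1 - e ^ 2)) / (2 * e ^ 3 * μ * q ^ 2) := by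
  have H_eq : H = -k * (1 - e ^ 2) / (2 * p) := by
    rw [eq_div_iff (mul_ne_zero two_ne_zero hp)]
    linear_combination hH
  rw [H_eq, hk]
  field_simp

theorem eccentricity_drift_tangential_sq (hm : m ≠ 0) (hμ : μ ≠ 0) (hp : p ≠ 0) (he : e ≠ 0)
    (hq : 1 + e * C ≠ 0) (hk : k = m * μ) (hM : M ^ 2 = m * k * p)
    (hH : 2 * p * H = -k * (1 - e ^ 2)) :
    M ^ 2 / (e * m * k ^ 2) * (m / 2)
        + H / (e ^ 3 * m * k ^ 2) * (m * (p / (1 + e * C))) ^ 2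
        - M ^ 4 / (2 * e ^ 3 * m ^ 2 * k ^ 4) * (M / p) ^ 2 * (1 + e * C) ^ 2
        + 2 * M * (M ^ 2 * H + m * k ^ 2) / (e ^ 3 * m ^ 2 * k ^ 4)
            * (m * (p / (1 + e * C))) * (M / p) * (1 + e * C)
      = p / (μ * e) * (2 - C / 2 * ((2 + e * C) / (1 + e * C))
          * (C + (e + C) / (1 + e * C))) := by
  rw [eccentricity_drift_energy_correction hm hμ hk hM,
    eccentricity_second_order_angularMomentum hm hμ hp hk hH,
    eccentricity_second_order_energy hm hμ hp hk hM,
    eccentricity_second_order_mixed hm hμ hp hk hM hH]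
  have tangential_factor : C + (e + C) / (1 + e * C)
      = (1 + e * C - (1 - e ^ 2) / (1 + e * C)) / e := by
    rw [eq_div_iff he, mul_comm, eccentricity_mul_tangential_factor hq]
  rw [tangential_factor]
  field_simp
  ring

theorem eccentricity_drift_radial_tangential (hm : m ≠ 0) (hμ : μ ≠ 0) (hp : p ≠ 0) (he : e ≠ 0)
    (hq : 1 + e * C ≠ 0) (hk : k = m * μ) (hM : M ^ 2 = m * k * p)
    (hH : 2 * p * H = -k * (1 - e ^ 2)) (hSC : S ^ 2 + C ^ 2 = 1) :
    2 * M * (M ^ 2 * H + m * k ^ 2) / (e ^ 3 * m ^ 2 * k ^ 4)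
          * (m * (p / (1 + e * C))) * (M / p) * (e * S)
        - M ^ 4 / (2 * e ^ 3 * m ^ 2 * k ^ 4) * (M / p) ^ 2 * (2 * e * S * (1 + e * C))
      = p / (μ * e * (1 + e * C)) * (e * S ^ 3 - 2 * S * C) := by
  rw [eccentricity_second_order_energy hm hμ hp hk hM,
    eccentricity_second_order_mixed hm hμ hp hk hM hH]
  calc p * (1 + e ^ 2) / (e ^ 3 * μ * (1 + e * C)) * (e * S)
        - p / (2 * e ^ 3 * μ) * (2 * e * S * (1 + e * C))
      = p / (μ * e * (1 + e * C)) * (e * S * (1 - C ^ 2) - 2 * S * C) := by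
        field_simp
        ring
    _ = p / (μ * e * (1 + e * C)) * (e * S ^ 3 - 2 * S * C) := by
        rw [← hSC]
        ring

end EccentricityDrift

/-- The condition `0 < a(1−e²)` also admits hyperbolic orbits, where `a < 0` and `1 < e`. -/
theorem stochastic_gauss_eccentricity_general
    (m μ k a e f H M r c : ℝ)
    (hm : m ≠ 0) (hμ : 0 < μ) (hk : k = m * μ)
    (hp : 0 < a * (1 - e ^ 2)) (he : e ≠ 0) (hq : 1 + e * cos f ≠ 0)
    (hH : H = -k / (2 * a))
    (hM : M = m * √(μ * a * (1 - e ^ 2)))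
    (hr : r = a * (1 - e ^ 2) / (1 + e * cos f))
    (hc : c = m * √(μ / (a * (1 - e ^ 2)))) :
    ∀ Rb Tb ρ τ χ : ℝ,
      2 * M * H / (e * m * k ^ 2) * (m * r * Tb)
        + M ^ 2 / (e * m * k ^ 2) *
            (c * (e * sin f * Rb + (1 + e * cos f) * Tb) + m / 2 * (ρ + τ))
        + H / (e ^ 3 * m * k ^ 2) * (m * r) ^ 2 * τ
        - M ^ 4 / (2 * e ^ 3 * m ^ 2 * k ^ 4) *
            (c ^ 2 * (e ^ 2 * sin f ^ 2 * ρ + (1 + e * cos f) ^ 2 * τ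
              + 2 * e * sin f * (1 + e * cos f) * χ))
        + 2 * M * (M ^ 2 * H + m * k ^ 2) / (e ^ 3 * m ^ 2 * k ^ 4)
            * (m * r) * c * ((1 + e * cos f) * τ + e * sin f * χ)
      = √(a * (1 - e ^ 2) / μ)
            * (sin f * Rb + (cos f + (e + cos f) / (1 + e * cos f)) * Tb)
        + a * (1 - e ^ 2) * cos f ^ 2 / (2 * e * μ) * ρ
        + a * (1 - e ^ 2) / (μ * e)
            * (2 - cos f / 2 * ((2 + e * cos f) / (1 + e * cos f))
              * (cos f + (e + cos f) / (1 + e * cos f))) * τ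
        + a * (1 - e ^ 2) / (μ * e * (1 + e * cos f))
            * (e * sin f ^ 3 - sin (2 * f)) * χ := by
  intro Rb Tb ρ τ χ
  have hμ₀ := hμ.ne'
  have hp₀ := hp.ne'
  have hk₀ : k ≠ 0 := hk ▸ mul_ne_zero hm hμ₀
  have ha₀ : a ≠ 0 := left_ne_zero_of_mul hp₀
  rw [mul_assoc] at hM
  have M_sq : M ^ 2 = m * k * (a * (1 - e ^ 2)) := by
    rw [hM, mul_pow, sq_sqrt (mul_pos hμ hp).le, hk]
    ring
  have energy : 2 * (a * (1 - e ^ 2)) * H = -k * (1 - e ^ 2) := by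
    rw [hH]
    field_simp
  have c_eq : c = M / (a * (1 - e ^ 2)) := by
    rw [hc, hM, sqrt_div_eq_sqrt_mul_div μ hp, mul_div_assoc]
  have sqrt_eq : √(a * (1 - e ^ 2) / μ) = M / k := by
    rw [hM, hk, sqrt_div_eq_sqrt_mul_div _ hμ, mul_comm _ μ, mul_div_mul_left _ _ hm]
  rw [sqrt_eq, c_eq, hr, sin_two_mul]
  linear_combination
    Rb * eccentricity_drift_radial (S := sin f) hm hk₀ hp₀ he M_sq
      + Tb * eccentricity_drift_tangential hm hk₀ hp₀ he hq M_sq energy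
      + ρ * eccentricity_drift_radial_sq hm hμ₀ hp₀ he hk M_sq (sin_sq_add_cos_sq f)
      + τ * eccentricity_drift_tangential_sq hm hμ₀ hp₀ he hq hk M_sq energy
      + χ * eccentricity_drift_radial_tangential hm hμ₀ hp₀ he hq hk M_sq energy
          (sin_sq_add_cos_sq f)

/-- Variation of the eccentricity: substituting the drifts and diffusions of
the angular momentum `M = m √(μ a(1−e²))` and of the energy `H = −k/(2a)` into
the Itô expansion of `e = √(1 + 2M²H/(mk²))` yields the stochastic Gauss
equation for the eccentricity.  Here `ρ = R̃·R̃`, `τ = T̃·T̃`, `χ = R̃·T̃`,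
`r = a(1−e²)/(1+e cos f)` and `c = m √(μ/(a(1−e²)))`. -/
theorem stochastic_gauss_eccentricity
    (m μ k a e f H M r c : ℝ)
    (hm : 0 < m) (hμ : 0 < μ) (hk : k = m * μ)
    (ha : 0 < a) (he0 : 0 < e) (he1 : e < 1)
    (hH : H = -k / (2 * a))
    (hM : M = m * Real.sqrt (μ * a * (1 - e ^ 2)))
    (hr : r = a * (1 - e ^ 2) / (1 + e * cos f))
    (hc : c = m * Real.sqrt (μ / (a * (1 - e ^ 2)))) :
    ∀ Rb Tb ρ τ χ : ℝ,
      2 * M * H / (e * m * k ^ 2) * (m * r * Tb)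
        + M ^ 2 / (e * m * k ^ 2) *
            (c * (e * sin f * Rb + (1 + e * cos f) * Tb) + m / 2 * (ρ + τ))
        + H / (e ^ 3 * m * k ^ 2) * (m * r) ^ 2 * τ
        - M ^ 4 / (2 * e ^ 3 * m ^ 2 * k ^ 4) *
            (c ^ 2 * (e ^ 2 * sin f ^ 2 * ρ + (1 + e * cos f) ^ 2 * τ
              + 2 * e * sin f * (1 + e * cos f) * χ))
        + 2 * M * (M ^ 2 * H + m * k ^ 2) / (e ^ 3 * m ^ 2 * k ^ 4)
            * (m * r) * c * ((1 + e * cos f) * τ + e * sin f * χ)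
      = Real.sqrt (a * (1 - e ^ 2) / μ)
            * (sin f * Rb + (cos f + (e + cos f) / (1 + e * cos f)) * Tb)
        + a * (1 - e ^ 2) * cos f ^ 2 / (2 * e * μ) * ρ
        + a * (1 - e ^ 2) / (μ * e)
            * (2 - cos f / 2 * ((2 + e * cos f) / (1 + e * cos f))
              * (cos f + (e + cos f) / (1 + e * cos f))) * τ
        + a * (1 - e ^ 2) / (μ * e * (1 + e * cos f))
            * (e * sin f ^ 3 - sin (2 * f)) * χ := by
  have hp : 0 < a * (1 - e ^ 2) := mul_pos ha (by nlinarith)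
  have hq : 0 < 1 + e * cos f := by nlinarith [neg_one_le_cos f]
  exact stochastic_gauss_eccentricity_general m μ k a e f H M r c hm.ne' hμ hk hp he0.ne'
    hq.ne' hH hM hr hc
end

section
/- Let m > 0, k > 0, a > 0, 0 < e < 1, μ = k/m, and f, ω ∈ ℝ; set φ = ω + f, r = a(1−e²)/(1 + e cos f), v = √(μ/(a(1−e²))) e sin f, w = √(μ a(1−e²))/r², A_x = m k e cos ω, A_y = m k e sin ω. Define the diffusion coefficients of the Laplace–Runge–Lenz components: Ã_x has radial coefficient m² r² w sin φ and tangential coefficient m² (2 r² w cos φ + r v sin φ); Ã_y has radial coefficient −m² r² w cos φ and tangential coefficient m² (2 r² w sin φ − r v cos φ). Then the radial and tangential coefficients of (A_x Ã_y − A_y Ã_x)/(A_x² + A_y²) equal, respectively, −√(a(1−e²)/μ) · cos f / e and √(a(1−e²)/μ) · (sin f / e) · (2 + e cos f)/(1 + e cos f). (This identifies the diffusion part of the stochastic Gauss equation for the pericenter ω.) -/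
open Real

/-!
In the polar frame at angle `φ` the noise moves the Laplace–Runge–Lenz vector `A` transversally by
`-m² r² w` (radial noise), and radially by `2 m² r² w` and transversally by `-m² r v` (tangential
noise). Since `A` has polar angle `ω` and length `m k e`, only the part of a displacement orthogonal
to the direction `ω` turns it, and this part is found by rotating the frame through `φ - ω = f`.
In terms of the semi-latus rectum `p = a (1 - e²)`, which parametrises elliptic, parabolic and
hyperbolic orbits alike, the specific angular momentum is `r² w = √(μ p)`, and `r v` is `√(μ p)`
times `e sin f / (1 + e cos f)`.
-/

theorem cross_div_normSq_polar {ρ : ℝ} (hρ : ρ ≠ 0) (ω φ R T : ℝ) :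
    (ρ * cos ω * (R * sin φ + T * cos φ) - ρ * sin ω * (R * cos φ - T * sin φ)) /
        ((ρ * cos ω) ^ 2 + (ρ * sin ω) ^ 2) =
      (R * sin (φ - ω) + T * cos (φ - ω)) / ρ := by
  have normSq_eq : (ρ * cos ω) ^ 2 + (ρ * sin ω) ^ 2 = ρ * ρ := by
    linear_combination ρ ^ 2 * cos_sq_add_sin_sq ω
  have cross_eq : ρ * cos ω * (R * sin φ + T * cos φ) - ρ * sin ω * (R * cos φ - T * sin φ) =
      ρ * (R * sin (φ - ω) + T * cos (φ - ω)) := by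
    rw [sin_sub, cos_sub]
    ring
  rw [normSq_eq, cross_eq, mul_div_mul_left _ _ hρ]

theorem mul_sqrt_div_self_right (x : ℝ) {y : ℝ} (hy : 0 ≤ y) : y * √(x / y) = √(x * y) := by
  rw [sqrt_div' x hy, sqrt_mul' x hy, mul_div_left_comm, div_sqrt]

theorem radius_mul_radialVelocity {p : ℝ} (hp : 0 ≤ p) (μ e f : ℝ) :
    p / (1 + e * cos f) * (√(μ / p) * e * sin f) =
      √(μ * p) * (e * sin f / (1 + e * cos f)) := by
  rw [← mul_sqrt_div_self_right μ hp]
  ring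

theorem two_mul_sin_sub_mul_cos {e f : ℝ} (hf : 1 + e * cos f ≠ 0) :
    2 * sin f - e * sin f / (1 + e * cos f) * cos f =
      sin f * ((2 + e * cos f) / (1 + e * cos f)) := by
  field_simp
  ring

theorem one_add_mul_cos_pos {e : ℝ} (he : |e| < 1) (f : ℝ) : 0 < 1 + e * cos f := by
  have abs_lt_one : |e * cos f| < 1 := by
    rw [abs_mul]
    exact (mul_le_of_le_one_right (abs_nonneg e) (abs_cos_le_one f)).trans_lt he
  linarith [neg_lt_of_abs_lt abs_lt_one]

theorem stochastic_gauss_pericenter_diffusion_general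
    (m k p e μ f ω φ r v w Ax Ay AxR AxT AyR AyT : ℝ)
    (hμ_pos : 0 < μ) (hp : 0 < p) (he : e ≠ 0) (hf : 1 + e * cos f ≠ 0)
    (hμ : μ = k / m) (hφ : φ = ω + f)
    (hr : r = p / (1 + e * cos f))
    (hv : v = √(μ / p) * e * sin f)
    (hw : w = √(μ * p) / r ^ 2)
    (hAx : Ax = m * k * e * cos ω)
    (hAy : Ay = m * k * e * sin ω)
    (hAxR : AxR = m ^ 2 * r ^ 2 * w * sin φ)
    (hAxT : AxT = m ^ 2 * (2 * r ^ 2 * w * cos φ + r * v * sin φ))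
    (hAyR : AyR = -(m ^ 2) * r ^ 2 * w * cos φ)
    (hAyT : AyT = m ^ 2 * (2 * r ^ 2 * w * sin φ - r * v * cos φ)) :
    (Ax * AyR - Ay * AxR) / (Ax ^ 2 + Ay ^ 2) = -√(p / μ) * cos f / e ∧
    (Ax * AyT - Ay * AxT) / (Ax ^ 2 + Ay ^ 2) =
      √(p / μ) * (sin f / e) * ((2 + e * cos f) / (1 + e * cos f)) := by
  obtain ⟨hk, hm⟩ : k ≠ 0 ∧ m ≠ 0 := div_ne_zero_iff.mp (hμ ▸ hμ_pos.ne')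
  have hA : m * k * e ≠ 0 := mul_ne_zero (mul_ne_zero hm hk) he
  have hφω : φ - ω = f := by rw [hφ, add_sub_cancel_left]
  have angular_momentum : r ^ 2 * w = √(μ * p) := by
    rw [hw, mul_div_cancel₀ _ (pow_ne_zero 2 (hr ▸ div_ne_zero hp.ne' hf))]
  have radius_velocity : r * v = √(μ * p) * (e * sin f / (1 + e * cos f)) := by
    rw [hr, hv, radius_mul_radialVelocity hp.le]
  have scale : m ^ 2 * √(μ * p) / (m * k) = √(p / μ) := by
    have hkμ : k = μ * m := ((eq_div_iff hm).mp hμ).symm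
    rw [mul_comm μ, ← mul_sqrt_div_self_right p hμ_pos.le, hkμ]
    field_simp
  constructor
  · calc (Ax * AyR - Ay * AxR) / (Ax ^ 2 + Ay ^ 2)
      _ = (0 * sin f + -(m ^ 2 * (r ^ 2 * w)) * cos f) / (m * k * e) := by
        rw [← hφω, ← cross_div_normSq_polar hA, hAx, hAy, hAxR, hAyR]
        ring
      _ = -(m ^ 2 * √(μ * p) / (m * k)) * cos f / e := by
        rw [angular_momentum]
        ring
      _ = -√(p / μ) * cos f / e := by rw [scale]
  · calc (Ax * AyT - Ay * AxT) / (Ax ^ 2 + Ay ^ 2)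
      _ = (2 * m ^ 2 * (r ^ 2 * w) * sin f + -(m ^ 2 * (r * v)) * cos f) / (m * k * e) := by
        rw [← hφω, ← cross_div_normSq_polar hA, hAx, hAy, hAxT, hAyT]
        ring
      _ = m ^ 2 * √(μ * p) / (m * k) *
            (2 * sin f - e * sin f / (1 + e * cos f) * cos f) / e := by
        rw [angular_momentum, radius_velocity]
        ring
      _ = √(p / μ) * (sin f / e) * ((2 + e * cos f) / (1 + e * cos f)) := by
        rw [scale, two_mul_sin_sub_mul_cos hf]
        ring

/-- Diffusion part of the stochastic Gauss equation for the pericenter `ω`: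
the radial and tangential coefficients of `(A_x Ã_y − A_y Ã_x)/(A_x² + A_y²)`
equal `−√(a(1−e²)/μ) cos f / e` and
`√(a(1−e²)/μ) (sin f/e)(2 + e cos f)/(1 + e cos f)` respectively, where
`Ã_x` has radial coefficient `m² r² w sin φ` and tangential coefficient
`m²(2 r² w cos φ + r v sin φ)`, and `Ã_y` has radial coefficient
`−m² r² w cos φ` and tangential coefficient `m²(2 r² w sin φ − r v cos φ)`. -/
theorem stochastic_gauss_pericenter_diffusion
    (m k a e μ f ω φ r v w Ax Ay AxR AxT AyR AyT : ℝ)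
    (hm : 0 < m) (hk : 0 < k) (ha : 0 < a) (he0 : 0 < e) (he1 : e < 1)
    (hμ : μ = k / m) (hφ : φ = ω + f)
    (hr : r = a * (1 - e ^ 2) / (1 + e * cos f))
    (hv : v = Real.sqrt (μ / (a * (1 - e ^ 2))) * e * sin f)
    (hw : w = Real.sqrt (μ * a * (1 - e ^ 2)) / r ^ 2)
    (hAx : Ax = m * k * e * cos ω)
    (hAy : Ay = m * k * e * sin ω)
    (hAxR : AxR = m ^ 2 * r ^ 2 * w * sin φ)
    (hAxT : AxT = m ^ 2 * (2 * r ^ 2 * w * cos φ + r * v * sin φ))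
    (hAyR : AyR = -(m ^ 2) * r ^ 2 * w * cos φ)
    (hAyT : AyT = m ^ 2 * (2 * r ^ 2 * w * sin φ - r * v * cos φ)) :
    (Ax * AyR - Ay * AxR) / (Ax ^ 2 + Ay ^ 2)
        = -(Real.sqrt (a * (1 - e ^ 2) / μ)) * cos f / e ∧
    (Ax * AyT - Ay * AxT) / (Ax ^ 2 + Ay ^ 2)
        = Real.sqrt (a * (1 - e ^ 2) / μ) * (sin f / e)
            * ((2 + e * cos f) / (1 + e * cos f)) := by
  have hp : 0 < a * (1 - e ^ 2) := mul_pos ha (sub_pos.mpr (pow_lt_one₀ he0.le he1 two_ne_zero))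
  have hf : 1 + e * cos f ≠ 0 := (one_add_mul_cos_pos (abs_lt.mpr ⟨by linarith, he1⟩) f).ne'
  exact stochastic_gauss_pericenter_diffusion_general m k (a * (1 - e ^ 2)) e μ f ω φ r v w
    Ax Ay AxR AxT AyR AyT (hμ ▸ div_pos hk hm) hp he0.ne' hf hμ hφ hr hv (mul_assoc μ a _ ▸ hw)
    hAx hAy hAxR hAxT hAyR hAyT
end
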